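/- For every positive integer d there are, up to group isomorphism, only finitely many groups G having a normal subgroup T such that T is isomorphic to the free abelian group ℤ^d, the quotient G/T is finite, and the centralizer of T in G equals T (so that the finite point group G/T acts faithfully on T by conjugation). -/

import Mathlib

namespace Bieb

/-- coordinatewise cast -/
def ic (d : ℕ) : (Fin d → ℤ) →+ (Fin d → ℚ) := (Int.castAddHom ℚ).compLeft (Fin d)

lemma ic_apply {d : ℕ} (z : Fin d → ℤ) (i : Fin d) : ic d z i = (z i : ℚ) := rfl

lemma ic_inj {d : ℕ} : Function.Injective (ic d) := by
  intro a b h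
  funext i
  have := congrFun h i
  simpa [ic_apply] using this

/-- the standard lattice -/
def L (d : ℕ) : AddSubgroup (Fin d → ℚ) := (ic d).range

lemma mem_L {d : ℕ} {x : Fin d → ℚ} : x ∈ L d ↔ ∃ z, ic d z = x := Iff.rfl

lemma single_mem_L {d : ℕ} (i : Fin d) : (Pi.single i (1 : ℚ) : Fin d → ℚ) ∈ L d := by
  refine ⟨Pi.single i 1, ?_⟩
  funext j
  rw [ic_apply]
  by_cases h : j = i
  · subst h; simp
  · simp [h]

lemma span_L (d : ℕ) : Submodule.span ℚ (L d : Set (Fin d → ℚ)) = ⊤ := by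
  rw [eq_top_iff, ← (Pi.basisFun ℚ (Fin d)).span_eq]
  apply Submodule.span_mono
  rintro _ ⟨i, rfl⟩
  simpa using single_mem_L i

lemma exists_denom {d : ℕ} (f : Module.End ℚ (Fin d → ℚ)) :
    ∃ n : ℕ, 0 < n ∧ ∀ x ∈ L d, n • f x ∈ L d := by
  obtain ⟨b, hb⟩ := IsLocalization.exist_integer_multiples_of_finite (nonZeroDivisors ℤ)
    (fun ij : Fin d × Fin d => f (Pi.single ij.1 1) ij.2)
  have hb0 : (b : ℤ) ≠ 0 := nonZeroDivisors.coe_ne_zero b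
  choose c hc using hb
  refine ⟨(b : ℤ).natAbs, Int.natAbs_pos.2 hb0, ?_⟩
  have key : ∀ x ∈ L d, (b : ℤ) • f x ∈ L d := by
    rintro _ ⟨z, rfl⟩
    refine ⟨fun i => ∑ j, z j * c (j, i), ?_⟩
    funext i
    rw [ic_apply]
    have h1 : ic d z = ∑ j, (z j : ℚ) • (Pi.single j (1 : ℚ) : Fin d → ℚ) := by
      rw [← Finset.univ_sum_single (ic d z)]
      refine Finset.sum_congr rfl fun j _ => ?_
      rw [← Pi.single_smul, ic_apply]; simp
    rw [h1, map_sum]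
    push_cast
    rw [Pi.smul_apply, Finset.sum_apply, Finset.smul_sum]
    refine Finset.sum_congr rfl fun j _ => ?_
    have := hc (j, i)
    simp only [algebraMap_int_eq, eq_intCast, zsmul_eq_mul] at this
    rw [this, map_smul]
    simp
    ring
  intro x hx
  rcases Int.natAbs_eq (b : ℤ) with h | h
  · have := key x hx
    rw [h] at this
    simpa using this
  · have := key x hx
    rw [h] at this
    simpa using this

section
variable {d : ℕ} {P : Type} [Group P] [Fintype P] (σ : P →* Module.End ℚ (Fin d → ℚ))

/-- the averaged l1 norm -/
noncomputable def r : Seminorm ℚ (Fin d → ℚ) :=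
  Seminorm.of (fun x => ∑ p : P, ∑ i, ‖σ p x i‖)
    (by
      intro x y
      rw [← Finset.sum_add_distrib]
      refine Finset.sum_le_sum fun p _ => ?_
      rw [← Finset.sum_add_distrib]
      refine Finset.sum_le_sum fun i _ => ?_
      rw [map_add]
      exact norm_add_le _ _)
    (by
      intro a x
      rw [Finset.mul_sum]
      refine Finset.sum_congr rfl fun p _ => ?_
      rw [Finset.mul_sum]
      refine Finset.sum_congr rfl fun i _ => ?_
      rw [map_smul, Pi.smul_apply, norm_smul])

lemma r_apply (x) : r σ x = ∑ p : P, ∑ i, ‖σ p x i‖ := rfl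

lemma r_inv (p : P) (x) : r σ (σ p x) = r σ x := by
  rw [r_apply, r_apply]
  refine Fintype.sum_equiv (Equiv.mulRight p) _ _ fun s => ?_
  simp

lemma r_nat (hσ : ∀ p, ∀ x ∈ L d, σ p x ∈ L d) (x) (hx : x ∈ L d) : ∃ k : ℕ, r σ x = k := by
  have : ∀ p : P, ∃ z, ic d z = σ p x := fun p => hσ p x hx
  choose z hz using this
  refine ⟨∑ p, ∑ i, (z p i).natAbs, ?_⟩
  rw [r_apply]
  push_cast
  refine Finset.sum_congr rfl fun p _ => Finset.sum_congr rfl fun i _ => ?_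
  rw [← hz p, ic_apply]
  simp [Nat.cast_natAbs, Int.norm_eq_abs]

lemma r_zero (x) (hx : r σ x = 0) : x = 0 := by
  rw [r_apply] at hx
  rw [Finset.sum_eq_zero_iff_of_nonneg (fun _ _ => Finset.sum_nonneg fun _ _ => norm_nonneg _)] at hx
  have := hx 1 (Finset.mem_univ _)
  rw [Finset.sum_eq_zero_iff_of_nonneg (fun _ _ => norm_nonneg _)] at this
  funext i
  simpa using this i (Finset.mem_univ _)

/-- invariant norm at least one on nonzero lattice vectors -/
structure Good (q : Seminorm ℚ (Fin d → ℚ)) : Prop where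
  inv : ∀ p x, q (σ p x) = q x
  lb : ∀ x ∈ L d, x ≠ 0 → 1 ≤ q x

/-- span of short lattice vectors -/
def W (q : Seminorm ℚ (Fin d → ℚ)) : Submodule ℚ (Fin d → ℚ) :=
  Submodule.span ℚ {x | x ∈ L d ∧ q x ≤ 1}

lemma r_good (hσ : ∀ p, ∀ x ∈ L d, σ p x ∈ L d) : Good σ (r σ) where
  inv := r_inv σ
  lb x hx h0 := by
    obtain ⟨k, hk⟩ := r_nat σ hσ x hx
    rw [hk]
    have : k ≠ 0 := by
      rintro rfl
      exact h0 (r_zero σ x (by simpa using hk))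
    exact_mod_cast Nat.one_le_iff_ne_zero.2 this

lemma exists_proj (U : Submodule ℚ (Fin d → ℚ)) (hU : ∀ p, ∀ x ∈ U, σ p x ∈ U) :
    ∃ π : Module.End ℚ (Fin d → ℚ), (∀ x, π x ∈ U) ∧ (∀ x ∈ U, π x = x) ∧
      ∀ p x, π (σ p x) = σ p (π x) := by
  obtain ⟨f, hf⟩ := U.subtype.exists_leftInverse_of_injective (by simp)
  have hf' : ∀ x : U, f x = x := fun x => by
    have := LinearMap.congr_fun hf x
    simpa using this
  have hcard : (Fintype.card P : ℚ) ≠ 0 := by exact_mod_cast Fintype.card_ne_zero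
  have cancel : ∀ (p : P) x, σ p (σ p⁻¹ x) = x := fun p x => by
    rw [← Module.End.mul_apply, ← map_mul]; simp
  refine ⟨(Fintype.card P : ℚ)⁻¹ • ∑ s : P, σ s ∘ₗ U.subtype ∘ₗ f ∘ₗ σ s⁻¹, ?_, ?_, ?_⟩
  · intro x
    rw [LinearMap.smul_apply, LinearMap.sum_apply]
    exact U.smul_mem _ (U.sum_mem fun s _ => hU s _ (f _).2)
  · intro x hx
    rw [LinearMap.smul_apply, LinearMap.sum_apply]
    have : ∀ s : P, (σ s ∘ₗ U.subtype ∘ₗ f ∘ₗ σ s⁻¹) x = x := by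
      intro s
      have h2 := hf' ⟨_, hU s⁻¹ x hx⟩
      simp only [LinearMap.comp_apply]
      simp only at h2
      rw [h2]
      exact cancel s x
    simp only [this, Finset.sum_const, Finset.card_univ]
    rw [← Nat.cast_smul_eq_nsmul ℚ, smul_smul, inv_mul_cancel₀ hcard, one_smul]
  · intro p x
    simp only [LinearMap.smul_apply, LinearMap.sum_apply, map_smul, map_sum]
    congr 1
    refine Fintype.sum_equiv (Equiv.mulLeft p⁻¹) _ _ fun s => ?_
    simp only [LinearMap.comp_apply, Equiv.coe_mulLeft, mul_inv_rev, inv_inv, map_mul,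
      Module.End.mul_apply, cancel]

lemma step (hσ : ∀ p, ∀ x ∈ L d, σ p x ∈ L d) (q) (hq : Good σ q) (hW : W q ≠ ⊤) :
    ∃ q', Good σ q' ∧ W q < W q' := by
  have hU : ∀ p, ∀ x ∈ W q, σ p x ∈ W q := by
    intro p x hx
    have : W q ≤ (W q).comap (σ p) := by
      apply Submodule.span_le.2
      rintro y ⟨hy, hy1⟩
      exact Submodule.subset_span ⟨hσ p y hy, by rw [hq.inv]; exact hy1⟩
    exact this hx
  obtain ⟨π, hπ1, hπ2, hπ3⟩ := exists_proj σ (W q) hU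
  obtain ⟨n, hn, hnL⟩ := exists_denom π
  have hnL' : ∀ x ∈ L d, n • (x - π x) ∈ L d := fun x hx => by
    rw [smul_sub]; exact (L d).sub_mem ((L d).nsmul_mem hx _) (hnL x hx)
  obtain ⟨x0, hx0, hx0W⟩ : ∃ x ∈ L d, x ∉ W q := by
    by_contra! h
    exact hW (top_le_iff.1 (by rw [← span_L d]; exact Submodule.span_le.2 h))
  have hsubW : ∀ x, x ∉ W q → n • (x - π x) ∉ W q := by
    intro x hx h
    rw [← Nat.cast_smul_eq_nsmul ℚ, Submodule.smul_mem_iff _ (by exact_mod_cast hn.ne')] at h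
    exact hx (by simpa using (W q).add_mem h (hπ1 x))
  have hne : ∃ k : ℕ, ∃ x ∈ L d, x ∉ W q ∧ q (π x) ≤ 1 ∧ r σ (n • (x - π x)) = k := by
    have h1 : π (n • (x0 - π x0)) = 0 := by
      rw [map_nsmul, map_sub, hπ2 _ (hπ1 x0), sub_self, smul_zero]
    obtain ⟨k, hk⟩ := r_nat σ hσ _ (hnL' _ (hnL' x0 hx0))
    exact ⟨k, n • (x0 - π x0), hnL' x0 hx0, hsubW x0 hx0W, by rw [h1]; simp, hk⟩
  classical
  obtain ⟨x1, hx1, hx1W, hx1q, hx1r⟩ := Nat.find_spec hne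
  have hmin := fun m => Nat.find_min' hne (m := m)
  generalize Nat.find hne = k at *
  have hk : (0 : ℝ) < k := by
    have : k ≠ 0 := by
      rintro rfl
      have := r_zero σ _ (hx1r.trans Nat.cast_zero)
      exact hsubW x1 hx1W (by rw [this]; exact zero_mem _)
    exact_mod_cast Nat.pos_of_ne_zero this
  let q' : Seminorm ℚ (Fin d → ℚ) :=
    q.comp π ⊔ ((k : NNReal)⁻¹ • (r σ).comp (n • (LinearMap.id - π)))
  have hq' : ∀ x, q' x = max (q (π x)) ((k : ℝ)⁻¹ * r σ (n • (x - π x))) := by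
    intro x
    rfl
  have hq'W : ∀ x ∈ W q, q' x = q x := by
    intro x hx
    rw [hq', hπ2 x hx]
    simp
  have hle : W q ≤ W q' := by
    apply Submodule.span_le.2
    intro y hy
    have hyW : y ∈ W q := Submodule.subset_span hy
    exact Submodule.subset_span ⟨hy.1, by rw [hq'W y hyW]; exact hy.2⟩
  refine ⟨q', ⟨?_, ?_⟩, ?_⟩
  · intro p x
    rw [hq', hq', hπ3, hq.inv, ← map_sub, ← map_nsmul, r_inv]
  · intro x hx h0
    by_cases hxW : x ∈ W q
    · rw [hq'W x hxW]; exact hq.lb x hx h0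
    · rw [hq']
      by_cases h : q (π x) ≤ 1
      · apply le_max_of_le_right
        obtain ⟨m, hm⟩ := r_nat σ hσ _ (hnL' x hx)
        have := hmin m ⟨x, hx, hxW, h, hm⟩
        rw [hm, inv_mul_eq_div, one_le_div hk]
        exact_mod_cast this
      · exact le_max_of_le_left (not_le.1 h).le
  · refine lt_of_le_of_ne hle fun h => hx1W ?_
    rw [h]
    refine Submodule.subset_span ⟨hx1, ?_⟩
    rw [hq', hx1r]
    exact max_le hx1q (inv_mul_cancel₀ hk.ne').le

lemma exists_wellrounded (hσ : ∀ p, ∀ x ∈ L d, σ p x ∈ L d) :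
    ∃ q, Good σ q ∧ W q = ⊤ := by
  have wf : WellFounded ((· > ·) : Submodule ℚ (Fin d → ℚ) → _ → Prop) := wellFounded_gt
  obtain ⟨U, ⟨q, hq, rfl⟩, hU⟩ := wf.has_min {U | ∃ q, Good σ q ∧ W q = U}
    ⟨_, r σ, r_good σ hσ, rfl⟩
  refine ⟨q, hq, ?_⟩
  by_contra h
  obtain ⟨q', h1, h2⟩ := step σ hσ q hq h
  exact hU _ ⟨q', h1, rfl⟩ h2

end

section
variable {d : ℕ} {P : Type} [Group P] [Fintype P] (σ : P →* Module.End ℚ (Fin d → ℚ))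

lemma sep {q : Seminorm ℚ (Fin d → ℚ)} (hq : Good σ q) (N : ℕ) (z w : Fin d → ℤ)
    (h : q (ic d z) + q (ic d w) < N) (hzw : ∀ i, (z i : ZMod N) = (w i : ZMod N)) : z = w := by
  have h1 : ∀ i, ∃ t, z i - w i = N * t := fun i => by
    have := (ZMod.intCast_eq_intCast_iff_dvd_sub _ _ N).1 (hzw i).symm
    exact this
  choose t ht using h1
  have h2 : ic d z - ic d w = (N : ℚ) • ic d t := by
    funext i
    simp only [Pi.sub_apply, Pi.smul_apply, ic_apply, smul_eq_mul]
    exact_mod_cast ht i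
  have h3 : (N : ℝ) * q (ic d t) < N := by
    have : q ((N : ℚ) • ic d t) = (N : ℝ) * q (ic d t) := by
      rw [map_smul_eq_mul, ← Rat.norm_cast_real]; simp
    rw [← this, ← h2]
    exact lt_of_le_of_lt (map_sub_le_add q _ _) h
  have h4 : ic d t = 0 := by
    by_contra h0
    have := hq.lb _ ⟨t, rfl⟩ h0
    nlinarith [(Nat.cast_nonneg N : (0 : ℝ) ≤ N)]
  apply ic_inj
  rw [h4, smul_zero] at h2
  exact sub_eq_zero.1 h2

lemma exists_basis (hσ : ∀ p, ∀ x ∈ L d, σ p x ∈ L d) :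
    ∃ v : Module.Basis (Fin d) ℚ (Fin d → ℚ), (∀ i, v i ∈ L d) ∧
      (∀ x ∈ L d, ∀ j, ∃ m : ℤ, (((2 * d + 1) ^ d).factorial : ℚ) * v.repr x j = m) ∧
      ∀ p i j, |v.repr (σ p (v i)) j| ≤ 1 := by
  obtain ⟨q, hq, hW⟩ := exists_wellrounded σ hσ
  have hfin : {z : Fin d → ℤ | q (ic d z) ≤ 1}.Finite := by
    refine Set.Finite.of_injOn (f := fun z => (fun i => (z i : ZMod 3) : Fin d → ZMod 3))
      (t := Set.univ) (Set.mapsTo_univ _ _) ?_ Set.finite_univ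
    intro z hz w hw h
    refine sep σ hq 3 z w ?_ (fun i => congrFun h i)
    simp only [Set.mem_ofPred_eq] at hz hw
    norm_num; linarith
  have hfin' : {x | x ∈ L d ∧ q x ≤ 1}.Finite := by
    refine (hfin.image (ic d)).subset ?_
    rintro _ ⟨⟨z, rfl⟩, h⟩
    exact ⟨z, h, rfl⟩
  set S := {x | x ∈ L d ∧ q x ≤ 1} with hS
  have hSspan : Submodule.span ℚ S = ⊤ := hW
  have : Finite S := hfin'
  let e := Pi.basisFun ℚ (Fin d)
  -- an initial basis
  obtain ⟨v0, hv0⟩ : ∃ v0 : Fin d → S, e.det (fun i => (v0 i : Fin d → ℚ)) ≠ 0 := by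
    obtain ⟨b, hbS, hb, hli⟩ := exists_linearIndependent ℚ S
    let B := Module.Basis.mk hli (by rw [Subtype.range_coe, hb, hSspan])
    let f : b ≃ Fin d := B.indexEquiv e
    refine ⟨fun i => ⟨f.symm i, hbS (f.symm i).2⟩, ?_⟩
    have := e.isUnit_det (B.reindex f)
    have h2 : (⇑(B.reindex f) : Fin d → Fin d → ℚ) = fun i => ((f.symm i : b) : Fin d → ℚ) := by
      funext i
      simp [B]
    rw [h2] at this
    exact this.ne_zero
  have : Nonempty (Fin d → S) := ⟨v0⟩
  obtain ⟨v1, hv1⟩ := Finite.exists_max (fun v : Fin d → S => |e.det (fun i => (v i : Fin d → ℚ))|)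
  have hdet : 0 < |e.det (fun i => (v1 i : Fin d → ℚ))| :=
    lt_of_lt_of_le (abs_pos.2 hv0) (hv1 v0)
  obtain ⟨hli, hsp⟩ := (e.is_basis_iff_det (v := fun i => (v1 i : Fin d → ℚ))).2
    (isUnit_iff_ne_zero.2 (abs_pos.1 hdet))
  let v := Module.Basis.mk hli hsp.ge
  have hv : ∀ i, v i = v1 i := fun i => by simp [v]
  have hbd : ∀ x ∈ S, ∀ j, |v.repr x j| ≤ 1 := by
    intro x hx j
    have h1 := congrArg (fun f => f x) (e.det_smul_mk_coord_eq_det_update hli hsp.ge j)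
    have h2 : e.det (fun i => (v1 i : Fin d → ℚ)) * v.repr x j
        = e.det (Function.update (fun i => (v1 i : Fin d → ℚ)) j x) := by
      exact h1
    have h3 := hv1 (Function.update v1 j ⟨x, hx⟩)
    have h4 : (fun i => ((Function.update v1 j ⟨x, hx⟩ i : S) : Fin d → ℚ))
        = Function.update (fun i => (v1 i : Fin d → ℚ)) j x := by
      funext i
      by_cases h : i = j
      · subst h; simp
      · simp [h]
    simp only [h4, ← h2, abs_mul] at h3
    by_contra! hc
    nlinarith
  refine ⟨v, fun i => by rw [hv]; exact (v1 i).2.1, ?_, ?_⟩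
  · rintro x ⟨z, rfl⟩ j
    choose w hw using fun i => (v1 i).2.1
    have hlt : Fintype.card (Fin d → ZMod (2 * d + 1)) <
        Fintype.card (Fin ((2 * d + 1) ^ d + 1)) := by
      simp [ZMod.card]
    let y : ℕ → Fin d → ℤ := fun k => (k : ℤ) • z - ∑ i, ⌊(k : ℚ) * v.repr (ic d z) i⌋ • w i
    have hy : ∀ k : ℕ, ic d (y k) = ∑ i, Int.fract ((k : ℚ) * v.repr (ic d z) i) • v i := by
      intro k
      have h1 : ic d z = ∑ i, v.repr (ic d z) i • v i := (v.sum_repr _).symm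
      simp only [y, map_sub, map_zsmul, map_sum, hw, ← hv]
      conv_lhs => rw [h1]
      rw [Finset.smul_sum, ← Finset.sum_sub_distrib]
      refine Finset.sum_congr rfl fun i _ => ?_
      rw [← v.sum_repr (ic d z)]
      simp only [Int.fract, sub_smul, mul_smul, v.sum_repr]
      rw [← Int.cast_smul_eq_zsmul ℚ, ← Int.cast_smul_eq_zsmul ℚ]
      simp
    have hyq : ∀ k : ℕ, q (ic d (y k)) ≤ d := by
      intro k
      rw [hy]
      calc q (∑ i, Int.fract ((k : ℚ) * v.repr (ic d z) i) • v i)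
          ≤ ∑ i, q (Int.fract ((k : ℚ) * v.repr (ic d z) i) • v i) :=
            Finset.le_sum_of_subadditive q (map_zero q).le (map_add_le_add q) _ _
        _ ≤ ∑ i : Fin d, 1 := by
          refine Finset.sum_le_sum fun i _ => ?_
          rw [map_smul_eq_mul, hv]
          refine mul_le_one₀ ?_ (apply_nonneg _ _) (v1 i).2.2
          have := Int.fract_lt_one ((k : ℚ) * v.repr (ic d z) i)
          have h0 := Int.fract_nonneg ((k : ℚ) * v.repr (ic d z) i)
          rw [← Rat.norm_cast_real, Real.norm_eq_abs, ← Rat.cast_abs, abs_of_nonneg h0]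
          exact_mod_cast this.le
        _ = d := by simp
    obtain ⟨a, b, hab, heq⟩ := Fintype.exists_ne_map_eq_of_card_lt
      (fun k : Fin ((2 * d + 1) ^ d + 1) =>
        (fun i => (y k i : ZMod (2 * d + 1)) : Fin d → ZMod (2 * d + 1))) hlt
    have heq' : y a = y b := by
      refine sep σ hq (2 * d + 1) _ _ ?_ fun i => congrFun heq i
      have := hyq a
      have := hyq b
      push_cast
      linarith
    wlog hlt' : (a : ℕ) < b generalizing a b
    · refine this b a hab.symm heq.symm heq'.symm ?_
      have : (a : ℕ) ≠ b := fun h => hab (Fin.ext h)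
      omega
    have hfr : Int.fract (((a : ℕ) : ℚ) * v.repr (ic d z) j)
        = Int.fract (((b : ℕ) : ℚ) * v.repr (ic d z) j) := by
      have h1 := hy a
      rw [heq', hy b] at h1
      have h2 := congrArg (fun x => v.repr x j) h1
      simpa [Finsupp.single_apply] using h2.symm
    obtain ⟨m, hm⟩ := Int.fract_eq_fract.1 hfr
    obtain ⟨c, hc⟩ : ((b : ℕ) - a) ∣ ((2 * d + 1) ^ d).factorial :=
      Nat.dvd_factorial (by omega) (by have := b.2; omega)
    refine ⟨-(c * m), ?_⟩
    rw [hc]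
    push_cast [hlt'.le]
    rw [← hm]
    ring
  · intro p i j
    apply hbd
    rw [hv]
    exact ⟨hσ p _ (v1 i).2.1, by rw [hq.inv]; exact (v1 i).2.2⟩

end

/-- rationals of absolute value at most one with denominator dividing `D` -/
def E (D : ℕ) : Set ℚ := {x | |x| ≤ 1 ∧ ∃ m : ℤ, (D : ℚ) * x = m}

lemma E_finite {D : ℕ} (hD : 0 < D) : (E D).Finite := by
  refine ((Set.finite_Icc (-(D : ℤ)) D).image (fun m : ℤ => (m : ℚ) / D)).subset ?_
  rintro x ⟨hx, m, hm⟩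
  have hD' : (0 : ℚ) < D := by exact_mod_cast hD
  have h := abs_le.1 hx
  refine ⟨m, ⟨?_, ?_⟩, ?_⟩
  · have : (-(D : ℚ)) ≤ m := by rw [← hm]; nlinarith
    exact_mod_cast this
  · have : (m : ℚ) ≤ D := by rw [← hm]; nlinarith
    exact_mod_cast this
  · simp only [← hm]; field_simp

/-- the denominator bound -/
def M (d : ℕ) : ℕ := ((2 * d + 1) ^ d).factorial

lemma M_pos (d : ℕ) : 0 < M d := Nat.factorial_pos _

/-- possible linear parts -/
def Mats (d : ℕ) : Set (Matrix (Fin d) (Fin d) ℚ) := {A | ∀ i j, A i j ∈ E (M d)}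

lemma Mats_finite (d : ℕ) : (Mats d).Finite := by
  have := Set.Finite.pi (t := fun _ : Fin d => {f : Fin d → ℚ | ∀ j, f j ∈ E (M d)}) (fun _ => by
    have := Set.Finite.pi (t := fun _ : Fin d => E (M d)) (fun _ => E_finite (M_pos d))
    refine this.subset ?_
    intro f hf j _
    exact hf j)
  refine this.subset ?_
  intro A hA i _ j
  exact hA i j

/-- denominators of translation parts -/
noncomputable def D (d : ℕ) : ℕ := M d * ((Mats d).ncard).factorial

lemma D_pos (d : ℕ) : 0 < D d := Nat.mul_pos (M_pos d) (Nat.factorial_pos _)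

/-- possible affine parts -/
def Affs (d : ℕ) : Set (Matrix (Fin d) (Fin d) ℚ × (Fin d → ℚ)) :=
  Mats d ×ˢ {u | ∀ j, u j ∈ E (D d)}

lemma Affs_finite (d : ℕ) : (Affs d).Finite := by
  refine (Mats_finite d).prod ?_
  have := Set.Finite.pi (t := fun _ : Fin d => E (D d)) (fun _ => E_finite (D_pos d))
  refine this.subset ?_
  intro f hf j _
  exact hf j

/-- the set of permutations described by `F` -/
def carrier {d : ℕ} (F : Set (Matrix (Fin d) (Fin d) ℚ × (Fin d → ℚ))) :
    Set (Equiv.Perm (Fin d → ℚ)) :=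
  {f | ∃ a ∈ F, ∃ t : Fin d → ℤ, ∀ x, f x = a.1.mulVec x + (a.2 + ic d t)}

/-- the model groups -/
def Models (d : ℕ) : Set (Subgroup (Equiv.Perm (Fin d → ℚ))) :=
  {H | ∃ F ⊆ Affs d, (H : Set (Equiv.Perm (Fin d → ℚ))) = carrier F}

lemma Models_finite (d : ℕ) : (Models d).Finite := by
  refine Set.Finite.subset (((Affs_finite d).finite_subsets.image carrier).preimage
    (SetLike.coe_injective.injOn)) ?_
  rintro H ⟨F, hF, h⟩
  exact ⟨F, hF, h.symm⟩

section
variable {d : ℕ} {G : Type} [Group G] {T : Subgroup G} [T.Normal] [Finite (G ⧸ T)]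

lemma exists_crossed (ι : T → (Fin d → ℚ)) (hι : ∀ s t, ι (s * t) = ι s + ι t)
    (hιL : ∀ t, ι t ∈ L d)
    (σ : (G ⧸ T) →* Module.End ℚ (Fin d → ℚ))
    (hσι : ∀ (g : G) (t : T), σ (g : G ⧸ T) (ι t) = ι (MulAut.conjNormal g t)) :
    ∃ b : G → (Fin d → ℚ), (∀ g h, b (g * h) = b g + σ (g : G ⧸ T) (b h)) ∧
      (∀ t : T, b t = ι t) ∧ ∀ g, Nat.card (G ⧸ T) • b g ∈ L d := by
  have := Fintype.ofFinite (G ⧸ T)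
  let s : G ⧸ T → G := Quotient.out
  have hs : ∀ p, ((s p : G) : G ⧸ T) = p := fun p => QuotientGroup.out_eq' p
  have hmem : ∀ (g : G) (p : G ⧸ T), g * s p * (s (g * p))⁻¹ ∈ T := by
    intro g p
    rw [← QuotientGroup.eq_one_iff]
    simp [hs]
  let τ : G → G ⧸ T → T := fun g p => ⟨_, hmem g p⟩
  have hτ : ∀ g h p, τ (g * h) p = MulAut.conjNormal g (τ h p) * τ g (h * p) := by
    intro g h p
    apply Subtype.ext
    simp [τ, MulAut.conjNormal_apply, mul_assoc]
  let n : ℚ := Fintype.card (G ⧸ T)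
  have hn : n ≠ 0 := by
    have : Fintype.card (G ⧸ T) ≠ 0 := Fintype.card_ne_zero
    exact Nat.cast_ne_zero.2 this
  refine ⟨fun g => n⁻¹ • ∑ p, ι (τ g p), ?_, ?_, ?_⟩
  · intro g h
    simp only [hτ, hι, Finset.sum_add_distrib, map_smul, map_sum, ← hσι, smul_add]
    rw [add_comm]
    congr 2
    exact Fintype.sum_equiv (Equiv.mulLeft (h : G ⧸ T)) _ _ fun p => rfl
  · intro t
    have : ∀ p, τ t p = t := by
      intro p
      apply Subtype.ext
      have h1 : ((t : G) : G ⧸ T) = 1 := (QuotientGroup.eq_one_iff _).2 t.2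
      simp [τ, h1]
    simp only [this, Finset.sum_const, Finset.card_univ]
    rw [← Nat.cast_smul_eq_nsmul ℚ, smul_smul, inv_mul_cancel₀ hn, one_smul]
  · intro g
    rw [Nat.card_eq_fintype_card, ← Nat.cast_smul_eq_nsmul ℚ, smul_smul, mul_inv_cancel₀ hn,
      one_smul]
    exact (L d).sum_mem fun p _ => hιL _

lemma embed (ι : T → (Fin d → ℚ)) (hι : ∀ s t, ι (s * t) = ι s + ι t)
    (hιL : ∀ x, x ∈ L d ↔ ∃ t, ι t = x) (hinj : Function.Injective ι)
    (σ : (G ⧸ T) →* Module.End ℚ (Fin d → ℚ)) (hσ : Function.Injective σ)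
    (hσι : ∀ (g : G) (t : T), σ (g : G ⧸ T) (ι t) = ι (MulAut.conjNormal g t)) :
    ∃ H ∈ Models d, Nonempty (G ≃* H) := by
  have := Fintype.ofFinite (G ⧸ T)
  have hσL : ∀ p, ∀ x ∈ L d, σ p x ∈ L d := by
    intro p x hx
    obtain ⟨g, rfl⟩ := QuotientGroup.mk_surjective p
    obtain ⟨t, rfl⟩ := (hιL x).1 hx
    rw [hσι]
    exact (hιL _).2 ⟨_, rfl⟩
  obtain ⟨b, hb1, hb2, hb3⟩ := exists_crossed ι hι (fun t => (hιL _).2 ⟨t, rfl⟩) σ hσι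
  obtain ⟨v, hv1, hv2, hv3⟩ := exists_basis σ hσL
  let c := v.equivFun
  have hc : ∀ x j, c x j = v.repr x j := fun x j => rfl
  have hb0 : b 1 = 0 := by simpa using hb1 1 1
  let φ0 : G →* Function.End (Fin d → ℚ) :=
    { toFun := fun g x => c (σ (g : G ⧸ T) (c.symm x) + b g)
      map_one' := by
        funext x
        change c (σ ((1 : G) : G ⧸ T) (c.symm x) + b 1) = x
        simp [hb0]
      map_mul' := by
        intro g h
        funext x
        change c (σ ((g * h : G) : G ⧸ T) (c.symm x) + b (g * h)) =
          c (σ (g : G ⧸ T) (c.symm (c (σ (h : G ⧸ T) (c.symm x) + b h))) + b g)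
        simp only [QuotientGroup.mk_mul, map_mul,
          Module.End.mul_apply, LinearEquiv.symm_apply_apply, map_add, hb1]
        abel }
  let φ : G →* Equiv.Perm (Fin d → ℚ) := φ0.toHomPerm
  let A : G ⧸ T → Matrix (Fin d) (Fin d) ℚ := fun p => LinearMap.toMatrix v v (σ p)
  have hφ : ∀ g x, φ g x = (A g).mulVec x + c (b g) := by
    intro g x
    have h1 : φ g x = c (σ (g : G ⧸ T) (c.symm x) + b g) := rfl
    rw [h1, map_add]
    congr 1
    have := LinearMap.toMatrix_mulVec_repr v v (σ (g : G ⧸ T)) (c.symm x)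
    have h2 : (⇑(v.repr (c.symm x)) : Fin d → ℚ) = x := c.apply_symm_apply x
    rw [h2] at this
    exact this.symm
  have hφinj : Function.Injective φ := by
    rw [injective_iff_map_eq_one]
    intro g hg
    have h1 : ∀ x, c (σ (g : G ⧸ T) (c.symm x) + b g) = x := fun x => by
      have : φ g x = x := by rw [hg]; rfl
      exact this
    have h2 : b g = 0 := by
      have := h1 0
      simpa using this
    have h3 : σ (g : G ⧸ T) = 1 := by
      refine LinearMap.ext fun y => ?_
      have := h1 (c y)
      rw [h2] at this
      simpa using this
    have h4 : (g : G ⧸ T) = 1 := hσ (by rw [h3, map_one])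
    have hgT : g ∈ T := (QuotientGroup.eq_one_iff _).1 h4
    have h5 : ι ⟨g, hgT⟩ = ι 1 := by
      rw [← hb2, ← hb2]
      simp [h2, hb0]
    exact congrArg Subtype.val (hinj h5)
  have hA : ∀ p, A p ∈ Mats d := by
    intro p i j
    have h1 : A p i j = v.repr (σ p (v j)) i := LinearMap.toMatrix_apply _ _ _ _ _
    rw [h1]
    exact ⟨hv3 p j i, hv2 _ (hσL p _ (hv1 j)) i⟩
  have hAinj : Function.Injective A := fun p q h =>
    hσ ((LinearMap.toMatrix v v).injective h)
  have hcard : Nat.card (G ⧸ T) ∣ ((Mats d).ncard).factorial := by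
    refine Nat.dvd_factorial Nat.card_pos ?_
    have : Finite (Mats d) := Mats_finite d
    exact Nat.card_le_card_of_injective (fun p => (⟨A p, hA p⟩ : Mats d))
      fun p q h => hAinj (congrArg Subtype.val h)
  have hint : ∀ g j, ∃ m : ℤ, (D d : ℚ) * c (b g) j = m := by
    intro g j
    obtain ⟨k, hk⟩ := hcard
    obtain ⟨m, hm⟩ := hv2 _ (hb3 g) j
    refine ⟨k * m, ?_⟩
    push_cast
    rw [← hm, D, hk, hc, map_nsmul]
    simp only [M, Finsupp.smul_apply, nsmul_eq_mul]
    push_cast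
    ring
  let fr : G → Fin d → ℚ := fun g j => Int.fract (c (b g) j)
  let fl : G → Fin d → ℤ := fun g j => ⌊c (b g) j⌋
  have hfr : ∀ g, c (b g) = fr g + ic d (fl g) := by
    intro g
    funext j
    simp [fr, fl, ic_apply]
  refine ⟨φ.range, ⟨Set.range fun g : G => (A g, fr g), ?_, ?_⟩,
    ⟨MonoidHom.ofInjective hφinj⟩⟩
  · rintro _ ⟨g, rfl⟩
    refine ⟨hA _, fun j => ⟨?_, ?_⟩⟩
    · have h0 := Int.fract_nonneg (c (b g) j)
      have h1 := Int.fract_lt_one (c (b g) j)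
      simp only [fr]
      rw [abs_of_nonneg h0]
      exact h1.le
    · obtain ⟨m, hm⟩ := hint g j
      refine ⟨m - D d * fl g j, ?_⟩
      push_cast
      rw [← hm]
      simp only [fr, fl, Int.fract]
      ring
  · ext f
    constructor
    · rintro ⟨g, rfl⟩
      exact ⟨_, ⟨g, rfl⟩, fl g, fun x => by rw [hφ, hfr]⟩
    · rintro ⟨_, ⟨g, rfl⟩, t, ht⟩
      obtain ⟨τ, hτ⟩ := (hιL (c.symm (ic d (t - fl g)))).1 (by
        rw [Module.Basis.equivFun_symm_apply]
        refine (L d).sum_mem fun i _ => ?_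
        rw [ic_apply, Int.cast_smul_eq_zsmul]
        exact (L d).zsmul_mem (hv1 i) _)
      refine ⟨τ * g, ?_⟩
      ext1 x
      have h1 : ((τ : G) : G ⧸ T) = 1 := (QuotientGroup.eq_one_iff _).2 τ.2
      rw [hφ, ht, hb1, hb2, QuotientGroup.mk_mul, h1, hτ]
      simp only [one_mul, map_one, Module.End.one_apply, map_add, LinearEquiv.apply_symm_apply,
        map_sub]
      rw [hfr g]
      abel

end

/-- extension of scalars of endomorphisms -/
noncomputable def extS (d : ℕ) : Module.End ℤ (Fin d → ℤ) →* Module.End ℚ (Fin d → ℚ) where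
  toFun f := Matrix.toLinAlgEquiv' ((Int.castRingHom ℚ).mapMatrix (LinearMap.toMatrixAlgEquiv' f))
  map_one' := by
    rw [map_one, map_one, map_one]
  map_mul' f g := by
    rw [map_mul, map_mul, map_mul]

lemma extS_apply {d : ℕ} (f : Module.End ℤ (Fin d → ℤ)) (z : Fin d → ℤ) :
    extS d f (ic d z) = ic d (f z) := by
  have h1 : extS d f (ic d z) =
    ((LinearMap.toMatrixAlgEquiv' f).map (Int.castRingHom ℚ)).mulVec (ic d z) := rfl
  have h2 : f z = (LinearMap.toMatrixAlgEquiv' f).mulVec z := by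
    rw [← Matrix.toLinAlgEquiv'_apply, Matrix.toLinAlgEquiv'_toMatrixAlgEquiv']
  rw [h1, h2]
  funext i
  rw [ic_apply]
  simp [Matrix.mulVec, dotProduct, ic_apply]

lemma main {d : ℕ} {G : Type} [Group G] (T : Subgroup G) [T.Normal] [Finite (G ⧸ T)]
    (e : T ≃* Multiplicative (Fin d → ℤ)) (hcen : Subgroup.centralizer (T : Set G) = T) :
    ∃ H ∈ Models d, Nonempty (G ≃* H) := by
  let κ : G →* Module.End ℤ (Fin d → ℤ) :=
    { toFun := fun g => AddMonoidHom.toIntLinearMap (AddMonoidHom.mk'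
        (fun z => (e (MulAut.conjNormal g (e.symm (Multiplicative.ofAdd z)))).toAdd)
        (fun a b => by simp))
      map_one' := by
        apply LinearMap.ext
        intro z
        simp
      map_mul' := by
        intro g h
        apply LinearMap.ext
        intro z
        simp }
  have hκ : ∀ g z, κ g z = (e (MulAut.conjNormal g (e.symm (Multiplicative.ofAdd z)))).toAdd :=
    fun g z => rfl
  let σ0 : G →* Module.End ℚ (Fin d → ℚ) := (extS d).comp κ
  let ι : T → (Fin d → ℚ) := fun t => ic d (e t).toAdd
  have hσι : ∀ g t, σ0 g (ι t) = ι (MulAut.conjNormal g t) := by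
    intro g t
    simp only [σ0, ι, MonoidHom.comp_apply, extS_apply, hκ]
    simp
  have hιinj : Function.Injective ι := by
    intro s t h
    exact e.injective (Multiplicative.toAdd.injective (ic_inj h))
  have hιL : ∀ x, x ∈ L d ↔ ∃ t, ι t = x := by
    intro x
    constructor
    · rintro ⟨z, rfl⟩
      exact ⟨e.symm (Multiplicative.ofAdd z), by simp [ι]⟩
    · rintro ⟨t, rfl⟩
      exact ⟨_, rfl⟩
  have hone : ∀ g, σ0 g = 1 ↔ g ∈ T := by
    intro g
    have h1 : σ0 g = 1 ↔ ∀ t : T, MulAut.conjNormal g t = t := by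
      constructor
      · intro h t
        apply hιinj
        rw [← hσι, h]
        rfl
      · intro h
        refine LinearMap.ext_on (span_L d) ?_
        intro x hx
        obtain ⟨t, rfl⟩ := (hιL x).1 hx
        rw [hσι, h]
        rfl
    have h2 : g ∈ T ↔ g ∈ Subgroup.centralizer (T : Set G) := by rw [hcen]
    rw [h1, h2, Subgroup.mem_centralizer_iff]
    constructor
    · intro h t ht
      have := congrArg Subtype.val (h ⟨t, ht⟩)
      rw [MulAut.conjNormal_apply] at this
      exact (mul_inv_eq_iff_eq_mul.1 this).symm
    · intro h t
      apply Subtype.ext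
      rw [MulAut.conjNormal_apply]
      exact mul_inv_eq_iff_eq_mul.2 (h t t.2).symm
  let σ : (G ⧸ T) →* Module.End ℚ (Fin d → ℚ) :=
    QuotientGroup.lift T σ0 fun g hg => (hone g).2 hg
  have hσ : ∀ g : G, σ (g : G ⧸ T) = σ0 g := fun g => rfl
  refine embed ι ?_ hιL hιinj σ ?_ hσι
  · intro s t
    simp [ι]
  · rw [injective_iff_map_eq_one]
    intro p hp
    obtain ⟨g, rfl⟩ := QuotientGroup.mk_surjective p
    exact (QuotientGroup.eq_one_iff _).2 ((hone g).1 hp)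

end Bieb


/-- **Bieberbach's finiteness theorem**: for every positive integer `d` there are,
up to group isomorphism, only finitely many groups `G` possessing a normal
subgroup `T ≅ ℤ^d` of finite index which is its own centralizer (i.e. `d`-dimensional
space groups). -/
theorem bieberbach_finitely_many_space_groups (d : ℕ) (hd : 0 < d) :
    ∃ (k : ℕ) (H : Fin k → Type) (grp : ∀ i, Group (H i)),
      ∀ (G : Type) [Group G] (T : Subgroup G), T.Normal →
        Nonempty (T ≃* Multiplicative (Fin d → ℤ)) →
        Finite (G ⧸ T) →
        Subgroup.centralizer (T : Set G) = T →
        ∃ i, letI := grp i; Nonempty (G ≃* H i) := by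
  have : Finite (Bieb.Models d) := Bieb.Models_finite d
  obtain ⟨k, ⟨f⟩⟩ := Finite.exists_equiv_fin (Bieb.Models d)
  refine ⟨k, fun i => ((f.symm i : Bieb.Models d) : Subgroup (Equiv.Perm (Fin d → ℚ))),
    fun i => inferInstance, ?_⟩
  intro G _ T hT hiso hfin hcen
  obtain ⟨e⟩ := hiso
  obtain ⟨H, hH, ⟨φ⟩⟩ := Bieb.main T e hcen
  refine ⟨f ⟨H, hH⟩, ?_⟩
  have h : ((f.symm (f ⟨H, hH⟩) : Bieb.Models d) : Subgroup (Equiv.Perm (Fin d → ℚ))) = H := by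
    rw [Equiv.symm_apply_apply]
  exact ⟨φ.trans (MulEquiv.subgroupCongr h.symm)⟩
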